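/- For every ε > 0 there exists N such that for every k > N, every h with 1 ≤ h ≤ k, and every selection (S_1, ..., S_h) of level h, one has |δ_h^{R} − δ_h| < ε, where δ_h^{R} = p_h · c^R / (m_k − p_k²) with c^R the number of permitted integers in the interval [p_k² + 1, m_k], and δ_h = c_h · p_h / m_h. -/

import Mathlib

/-- The `h`-th prime number (1-indexed): `nthPrime 1 = 2`, `nthPrime 2 = 3`, ... -/
noncomputable def nthPrime (h : ℕ) : ℕ := Nat.nth Nat.Prime (h - 1)

/-- `mK k = p_1 * p_2 * ⋯ * p_k`, the product of the first `k` primes. -/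
noncomputable def mK (k : ℕ) : ℕ := ∏ h ∈ Finset.Icc 1 k, nthPrime h

/-- `cK k = (p_1 - 1) * (p_2 - 2) * ⋯ * (p_k - 2)`. -/
noncomputable def cK (k : ℕ) : ℕ := (nthPrime 1 - 1) * ∏ h ∈ Finset.Icc 2 k, (nthPrime h - 2)

/-- A selection of level `k`: a family of sets of residues `S h ⊆ {0, …, p_h - 1}`
with `|S 1| = 1` and `|S h| = 2` for `2 ≤ h ≤ k`. -/
def IsSelection (k : ℕ) (S : ℕ → Finset ℕ) : Prop :=
  (∀ h, 1 ≤ h → h ≤ k → S h ⊆ Finset.range (nthPrime h)) ∧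
    (S 1).card = 1 ∧ ∀ h, 2 ≤ h → h ≤ k → (S h).card = 2

/-- `n` is permitted for a selection of level `k` if for every `1 ≤ h ≤ k` the residue of
`n` modulo `p_h` is not a selected remainder. -/
def Permitted (k : ℕ) (S : ℕ → Finset ℕ) (n : ℕ) : Prop :=
  ∀ h ∈ Finset.Icc 1 k, n % nthPrime h ∉ S h

noncomputable instance (k : ℕ) (S : ℕ → Finset ℕ) : DecidablePred (Permitted k S) := fun n =>
  inferInstanceAs (Decidable (∀ h ∈ Finset.Icc 1 k, n % nthPrime h ∉ S h))

/-- The density `δ_k = c_k · p_k / m_k` of permitted `k`-tuples within a period. -/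
noncomputable def deltaK (k : ℕ) : ℝ := (cK k : ℝ) * nthPrime k / mK k

lemma np_prime (h : ℕ) : (nthPrime h).Prime := Nat.prime_nth_prime _

lemma np_lt {a b : ℕ} (ha : 1 ≤ a) (hab : a < b) : nthPrime a < nthPrime b := by
  unfold nthPrime
  exact Nat.nth_strictMono Nat.infinite_setOfPred_prime (by omega)

lemma np_succ_le (k : ℕ) (hk : 1 ≤ k) : nthPrime (k + 1) ≤ 2 * nthPrime k := by
  obtain ⟨q, hq, h1, h2⟩ := Nat.exists_prime_lt_and_le_two_mul (nthPrime k) (np_prime k).ne_zero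
  refine le_trans ?_ h2
  unfold nthPrime at *
  by_contra hc
  push Not at hc
  have h3 : Nat.nth Nat.Prime (Nat.count Nat.Prime q) = q := Nat.nth_count hq
  rw [← h3] at h1 hc
  have h4 := (Nat.nth_lt_nth Nat.infinite_setOfPred_prime).1 h1
  have h5 := (Nat.nth_lt_nth Nat.infinite_setOfPred_prime).1 hc
  omega

lemma np_gt (k : ℕ) (hk : 1 ≤ k) : k < nthPrime k := by
  unfold nthPrime
  have := Nat.add_two_le_nth_prime (k - 1)
  omega

lemma mK_succ (k : ℕ) : mK (k + 1) = mK k * nthPrime (k + 1) := by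
  unfold mK
  rw [Finset.prod_Icc_succ_top (by omega)]

lemma mK_pos (k : ℕ) : 0 < mK k := Finset.prod_pos fun i _ => (np_prime i).pos

lemma mK_dvd {h k : ℕ} (hk : h ≤ k) : mK h ∣ mK k :=
  Finset.prod_dvd_prod_of_subset _ _ _ (Finset.Icc_subset_Icc_right hk)

lemma mK_big (k : ℕ) (hk : 4 ≤ k) : nthPrime k ^ 4 ≤ 64 * mK k := by
  obtain ⟨j, rfl⟩ : ∃ j, k = j + 1 + 1 + 1 + 1 := ⟨k - 4, by omega⟩
  rw [mK_succ, mK_succ, mK_succ, mK_succ]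
  have h1 := np_succ_le (j + 1) (by omega)
  have h2 := np_succ_le (j + 1 + 1) (by omega)
  have h3 := np_succ_le (j + 1 + 1 + 1) (by omega)
  have h0 := mK_pos j
  generalize nthPrime (j + 1 + 1 + 1 + 1) = d at *
  generalize nthPrime (j + 1 + 1 + 1) = c at *
  generalize nthPrime (j + 1 + 1) = b at *
  generalize nthPrime (j + 1) = a at *
  have h4 : d ≤ 4 * b := by omega
  have h5 : d ≤ 8 * a := by omega
  calc d ^ 4 = 1 * d * d * d * d := by ring
    _ ≤ mK j * (8 * a) * (4 * b) * (2 * c) * d := by gcongr; omega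
    _ = _ := by ring

lemma mK_coprime (h : ℕ) : (mK h).Coprime (nthPrime (h + 1)) := by
  unfold mK
  refine Nat.Coprime.prod_left fun i hi => ?_
  rw [Finset.mem_Icc] at hi
  exact (Nat.coprime_primes (np_prime _) (np_prime _)).2 (np_lt hi.1 (by omega)).ne

lemma permitted_mod (h m : ℕ) (S : ℕ → Finset ℕ) (hd : mK h ∣ m) (n : ℕ) :
    Permitted h S (n % m) ↔ Permitted h S n := by
  unfold Permitted
  refine forall₂_congr fun j hj => ?_
  rw [Nat.mod_mod_of_dvd _ ((Finset.dvd_prod_of_mem _ hj).trans hd)]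

lemma count_period (S : ℕ → Finset ℕ) (h : ℕ)
    (hS : ∀ j, 1 ≤ j → j ≤ h → S j ⊆ Finset.range (nthPrime j)) :
    ((Finset.range (mK h)).filter (fun n => Permitted h S n)).card
      = ∏ j ∈ Finset.Icc 1 h, (nthPrime j - (S j).card) := by
  induction h with
  | zero => simp [mK, Permitted]
  | succ h ih =>
    rw [Finset.prod_Icc_succ_top (by omega), ← ih fun j h1 h2 => hS j h1 (by omega)]
    have hp := (np_prime (h + 1)).pos
    have hm := mK_pos h
    have hc := mK_coprime h
    have e : nthPrime (h + 1) - (S (h + 1)).card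
        = (Finset.range (nthPrime (h + 1)) \ S (h + 1)).card := by
      rw [Finset.card_sdiff_of_subset (hS _ (by omega) le_rfl), Finset.card_range]
    have key : ∀ n, Permitted (h + 1) S n ↔ Permitted h S n ∧
        n % nthPrime (h + 1) ∉ S (h + 1) := by
      intro n
      unfold Permitted
      simp only [Finset.mem_Icc]
      constructor
      · intro H
        exact ⟨fun j hj => H j ⟨hj.1, by omega⟩, H _ ⟨by omega, le_rfl⟩⟩
      · rintro ⟨H1, H2⟩ j ⟨hj1, hj2⟩
        rcases Nat.lt_or_ge h j with hj | hj
        · obtain rfl : j = h + 1 := by omega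
          exact H2
        · exact H1 j ⟨hj1, hj⟩
    rw [e, ← Finset.card_product]
    refine Finset.card_nbij (fun n => (n % mK h, n % nthPrime (h + 1))) ?_ ?_ ?_
    · intro n hn
      simp only [Finset.mem_coe, Finset.mem_filter, Finset.mem_range, Finset.mem_product,
        Finset.mem_sdiff, key] at hn ⊢
      exact ⟨⟨Nat.mod_lt _ hm, (permitted_mod h _ S dvd_rfl n).2 hn.2.1⟩,
        Nat.mod_lt _ hp, hn.2.2⟩
    · intro a ha b hb hab
      simp only [Finset.coe_filter, Finset.mem_range, Set.mem_ofPred_eq, mK_succ] at ha hb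
      simp only [Prod.mk.injEq] at hab
      have : a ≡ b [MOD mK h * nthPrime (h + 1)] :=
        (Nat.modEq_and_modEq_iff_modEq_mul hc).1 ⟨hab.1, hab.2⟩
      exact this.eq_of_lt_of_lt ha.1 hb.1
    · rintro ⟨a, b⟩ hab
      simp only [Finset.coe_product, Set.mem_prod, Finset.mem_coe, Finset.mem_filter,
        Finset.mem_range, Finset.mem_sdiff] at hab
      obtain ⟨⟨ha, hPa⟩, hb, hbS⟩ := hab
      let x := Nat.chineseRemainder hc a b
      have hx1 : (x : ℕ) % mK h = a := by
        have := x.2.1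
        rwa [Nat.ModEq, Nat.mod_eq_of_lt ha] at this
      have hx2 : (x : ℕ) % nthPrime (h + 1) = b := by
        have := x.2.2
        rwa [Nat.ModEq, Nat.mod_eq_of_lt hb] at this
      refine ⟨x, ?_, by simp [hx1, hx2]⟩
      simp only [Finset.coe_filter, Finset.mem_range, Set.mem_ofPred_eq, mK_succ, key]
      refine ⟨Nat.chineseRemainder_lt_mul hc a b hm.ne' hp.ne', ?_, by rwa [hx2]⟩
      rw [← permitted_mod h _ S dvd_rfl, hx1]
      exact hPa

lemma prod_eq_cK (S : ℕ → Finset ℕ) (h : ℕ) (h1 : 1 ≤ h) (hS : IsSelection h S) :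
    ∏ j ∈ Finset.Icc 1 h, (nthPrime j - (S j).card) = cK h := by
  obtain ⟨-, hS1, hS2⟩ := hS
  unfold cK
  induction h, h1 using Nat.le_induction with
  | base => simp [hS1]
  | succ n hn ih =>
    rw [Finset.prod_Icc_succ_top (by omega), Finset.prod_Icc_succ_top (by omega),
      ih fun j a b => hS2 j a (by omega), hS2 (n + 1) (by omega) le_rfl, mul_assoc]

lemma count_mul (S : ℕ → Finset ℕ) (h t : ℕ) :
    ((Finset.Ico 1 (1 + mK h * t)).filter (fun n => Permitted h S n)).card
      = t * ((Finset.range (mK h)).filter (fun n => Permitted h S n)).card := by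
  have hper : Function.Periodic (Permitted h S) (mK h) := by
    intro n
    rw [← permitted_mod h _ S dvd_rfl (n + mK h), Nat.add_mod_right]
    exact propext (permitted_mod h _ S dvd_rfl n)
  induction t with
  | zero => simp
  | succ t ih =>
    have e : Finset.Ico 1 (1 + mK h * (t + 1)) = Finset.Ico 1 (1 + mK h * t) ∪
        Finset.Ico (1 + mK h * t) (1 + mK h * t + mK h) := by
      rw [Finset.Ico_union_Ico_eq_Ico (by omega) (by omega)]
      congr 1
      ring
    rw [e, Finset.filter_union, Finset.card_union_of_disjoint, ih,
      Nat.filter_Ico_card_eq_of_periodic _ _ _ hper, Nat.count_eq_card_filter_range]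
    · ring
    · exact Finset.disjoint_filter_filter (Finset.Ico_disjoint_Ico_consecutive _ _ _)

lemma analytic (p C L R m P : ℝ) (hp : 0 ≤ p) (hm : 0 < m) (hP : P < m) (hP0 : 0 ≤ P)
    (hsum : L + R = C) (hL : 0 ≤ L) (hLP : L ≤ P) (hC : 0 ≤ C) (hCm : C ≤ m) :
    |p * R / (m - P) - p * (C / m)| ≤ p * P / (m - P) := by
  have h1 : 0 < m - P := by linarith
  have e : p * R / (m - P) - p * (C / m) = p * ((C * P - L * m) / m) / (m - P) := by
    obtain rfl : R = C - L := by linarith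
    field_simp
    ring
  rw [e, abs_div, abs_of_pos h1, abs_mul, abs_of_nonneg hp, abs_div, abs_of_pos hm]
  gcongr
  rw [div_le_iff₀ hm, abs_le]
  constructor <;> nlinarith [mul_nonneg hC hP0, mul_nonneg hL hm.le, mul_le_mul_of_nonneg_right hCm hP0, mul_le_mul_of_nonneg_right hLP hm.le]

/-- The density in the right interval converges uniformly: for every `ε > 0` there is `N`
such that for all `k > N`, all `1 ≤ h ≤ k` and every selection of level `h`,
`|δ_h^R - δ_h| < ε`, where `δ_h^R = p_h · c^R / (m_k - p_k²)` with `c^R` the number of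
permitted integers in `[p_k² + 1, m_k]`, and `δ_h = c_h · p_h / m_h`. -/
theorem right_density_uniformly_close (ε : ℝ) (hε : 0 < ε) :
    ∃ N : ℕ, ∀ k : ℕ, k > N → ∀ h : ℕ, 1 ≤ h → h ≤ k →
      ∀ S : ℕ → Finset ℕ, IsSelection h S →
        |(nthPrime h : ℝ) *
            (((Finset.Icc (nthPrime k ^ 2 + 1) (mK k)).filter
              (fun n => Permitted h S n)).card : ℝ)
            / ((mK k : ℝ) - (nthPrime k : ℝ) ^ 2)
          - (cK h : ℝ) * nthPrime h / mK h| < ε := by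
  obtain ⟨M, hM⟩ := exists_nat_gt (128 / ε)
  refine ⟨max M 12, fun k hk h h1 hhk S hS => ?_⟩
  have hkM : M < k := lt_of_le_of_lt (le_max_left _ _) hk
  have hk12 : 12 < k := lt_of_le_of_lt (le_max_right _ _) hk
  have hpk := np_gt k (by omega)
  have hbig := mK_big k (by omega)
  have hph : nthPrime h ≤ nthPrime k := by
    rcases hhk.lt_or_eq with hlt | rfl
    · exact (np_lt h1 hlt).le
    · exact le_rfl
  obtain ⟨t, ht⟩ := mK_dvd hhk
  have hmk := mK_pos k
  have hmh := mK_pos h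
  set p := nthPrime k with hpdef
  have hp12 : 12 < p := by omega
  have hbig2 : p ^ 4 + 128 * p ^ 2 ≤ 128 * mK k := by
    have h144 : 128 ≤ p ^ 2 := by nlinarith
    have h4 : 128 * p ^ 2 ≤ p ^ 2 * p ^ 2 := by gcongr
    have h5 : p ^ 2 * p ^ 2 = p ^ 4 := by ring
    omega
  have hlt : p ^ 2 < mK k := by
    have := pow_pos (by omega : 0 < p) 4
    omega
  -- counts
  set R := ((Finset.Icc (p ^ 2 + 1) (mK k)).filter (fun n => Permitted h S n)).card with hR
  set L := ((Finset.Ico 1 (p ^ 2 + 1)).filter (fun n => Permitted h S n)).card with hL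
  have hLP : L ≤ p ^ 2 := by
    refine (Finset.card_filter_le _ _).trans ?_
    simp
  have hsum : L + R = t * cK h := by
    rw [← prod_eq_cK S h h1 hS, ← count_period S h hS.1, ← count_mul, ← ht, hL, hR,
      ← Finset.card_union_of_disjoint, ← Finset.filter_union]
    · congr 2
      ext n
      simp only [Finset.mem_union, Finset.mem_Ico, Finset.mem_Icc]
      omega
    · refine Finset.disjoint_filter_filter ?_
      rw [Finset.disjoint_left]
      intro n hn
      simp only [Finset.mem_Ico, Finset.mem_Icc] at hn ⊢
      omega
  have hCm : t * cK h ≤ mK k := by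
    rw [← prod_eq_cK S h h1 hS, ← count_period S h hS.1, ht, mul_comm]
    gcongr
    exact (Finset.card_filter_le _ _).trans (by simp)
  have hA := analytic (nthPrime h) (t * cK h : ℕ) L R (mK k) ((p : ℝ) ^ 2)
    (by positivity) (by exact_mod_cast hmk) (by exact_mod_cast hlt) (by positivity)
    (by exact_mod_cast hsum) (by positivity) (by exact_mod_cast hLP) (by positivity)
    (by exact_mod_cast hCm)
  have ht0 : 0 < t := by
    rcases Nat.eq_zero_or_pos t with h0 | h0
    · subst h0; omega
    · exact h0
  have e : (cK h : ℝ) * nthPrime h / mK h = nthPrime h * (((t * cK h : ℕ) : ℝ) / mK k) := by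
    rw [ht]
    push_cast
    have : (t : ℝ) ≠ 0 := by exact_mod_cast ht0.ne'
    have : (mK h : ℝ) ≠ 0 := by exact_mod_cast hmh.ne'
    field_simp
  rw [e]
  refine hA.trans_lt ?_
  have hb : (p : ℝ) ^ 4 + 128 * p ^ 2 ≤ 128 * mK k := by exact_mod_cast hbig2
  have hlt' : (p : ℝ) ^ 2 < mK k := by exact_mod_cast hlt
  have hph' : (nthPrime h : ℝ) ≤ p := by exact_mod_cast hph
  have hpM : (M : ℝ) < p := by exact_mod_cast hkM.trans hpk
  have hp0 : (0 : ℝ) < p := by exact_mod_cast (by omega : 0 < p)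
  have hεp : 128 < ε * p := by
    have := hM.trans hpM
    rw [div_lt_iff₀ hε] at this
    linarith
  rw [div_lt_iff₀ (by linarith)]
  have s1 : (nthPrime h : ℝ) * p ^ 2 ≤ p * p ^ 2 := by gcongr
  have s2 : 128 * (p : ℝ) ^ 3 < ε * p * p ^ 3 := by gcongr
  have s3 : ε * (p : ℝ) ^ 4 ≤ ε * (128 * (mK k - p ^ 2)) := by gcongr; linarith
  nlinarith
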